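/- For every bounded continuous function f : ℝ → ℝ, the integral ∫_0^1 f((1−x)/c^2) · c (2π x (1−x)^3)^{−1/2} exp(−c^2 x/(2(1−x))) dx converges, as c → 0⁺, to ∫_0^∞ f(y) (2π y^3)^{−1/2} e^{−1/(2y)} dy. In other words, if D(c) has density d_c then c^{−2}(1 − D(c)) converges in distribution, as c → 0⁺, to the Lévy(1) distribution, which is the law of Z^{−2} for Z a standard Gaussian random variable. -/

import Mathlib

open MeasureTheory Filter

/-!
Let `Z` be a standard Gaussian. The law with density `d_c` is that of `Z² / (c² + Z²)`, and the
Lévy(1) law is that of `Z⁻²`. Substituting `x = z² / (c² + z²)` in the first integral and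
`y = 1 / z²` in the second turns both into integrals against the half-Gaussian density
`2 / √(2π) * exp (-z² / 2)` on `(0, ∞)`, of `f (1 / (c² + z²))` and of `f (1 / z²)` respectively
(`integral_fireproof_eq` and `integral_levy_eq`). The convergence then follows from dominated
convergence, the bound being a multiple of the half-Gaussian density.
-/

/-- The substitution `x = z² / (c² + z²)`, expressing that `D(c)` has the law of
`Z² / (c² + Z²)` with `Z` standard Gaussian. -/
lemma integral_fireproof_eq (f : ℝ → ℝ) {c : ℝ} (hc : 0 < c) :
    (∫ x in Set.Ioo (0 : ℝ) 1,
          f ((1 - x) / c ^ 2) * (c / Real.sqrt (2 * Real.pi * x * (1 - x) ^ 3)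
            * Real.exp (-(c ^ 2 * x) / (2 * (1 - x)))))
      = ∫ z in Set.Ioi (0 : ℝ),
          f (1 / (c ^ 2 + z ^ 2)) * (2 / Real.sqrt (2 * Real.pi) * Real.exp (-z ^ 2 / 2)) := by
  have himg : (fun z : ℝ => z ^ 2 / (c ^ 2 + z ^ 2)) '' Set.Ioi 0 = Set.Ioo (0 : ℝ) 1 := by
    ext x
    constructor
    · rintro ⟨z, hz, rfl⟩
      have hz : 0 < z := hz
      refine ⟨by positivity, ?_⟩
      rw [div_lt_one (by positivity)]
      have : 0 < c ^ 2 := by positivity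
      linarith
    · rintro ⟨h0, h1⟩
      have h1' : 0 < 1 - x := by linarith
      refine ⟨c * Real.sqrt (x / (1 - x)), Set.mem_Ioi.2 (by positivity), ?_⟩
      simp only [mul_pow]
      rw [Real.sq_sqrt (by positivity)]
      field_simp
      ring
  have hinj : Set.InjOn (fun z : ℝ => z ^ 2 / (c ^ 2 + z ^ 2)) (Set.Ioi 0) := by
    intro a ha b hb h
    have ha : 0 < a := ha
    have hb : 0 < b := hb
    simp only at h
    rw [div_eq_div_iff (by positivity) (by positivity)] at h
    have h2 : c ^ 2 * a ^ 2 = c ^ 2 * b ^ 2 := by linarith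
    have h3 := mul_left_cancel₀ (by positivity) h2
    exact (pow_left_inj₀ ha.le hb.le two_ne_zero).1 h3
  have hder : ∀ z ∈ Set.Ioi (0 : ℝ), HasDerivWithinAt (fun z : ℝ => z ^ 2 / (c ^ 2 + z ^ 2))
      (2 * z * c ^ 2 / (c ^ 2 + z ^ 2) ^ 2) (Set.Ioi 0) z := by
    intro z hz
    have hz : 0 < z := hz
    have h1 : HasDerivAt (fun z : ℝ => z ^ 2) (2 * z) z := by simpa using hasDerivAt_pow 2 z
    have h2 := h1.div (h1.const_add (c ^ 2)) (by positivity : c ^ 2 + z ^ 2 ≠ 0)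
    refine (h2.congr_deriv ?_).hasDerivWithinAt
    ring
  rw [← himg, integral_image_eq_integral_abs_deriv_smul measurableSet_Ioi hder hinj]
  refine setIntegral_congr_fun measurableSet_Ioi fun z hz => ?_
  have hz : 0 < z := hz
  have hx : 1 - z ^ 2 / (c ^ 2 + z ^ 2) = c ^ 2 / (c ^ 2 + z ^ 2) := by field_simp; ring
  have hs : Real.sqrt (2 * Real.pi * (z ^ 2 / (c ^ 2 + z ^ 2)) * (c ^ 2 / (c ^ 2 + z ^ 2)) ^ 3)
      = Real.sqrt (2 * Real.pi) * (z * c ^ 3 / (c ^ 2 + z ^ 2) ^ 2) := by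
    rw [← Real.sqrt_sq (by positivity : 0 ≤ z * c ^ 3 / (c ^ 2 + z ^ 2) ^ 2),
      ← Real.sqrt_mul (by positivity)]
    congr 1
    field_simp
  have he : -(c ^ 2 * (z ^ 2 / (c ^ 2 + z ^ 2))) / (2 * (c ^ 2 / (c ^ 2 + z ^ 2)))
      = -z ^ 2 / 2 := by field_simp
  have hf' : c ^ 2 / (c ^ 2 + z ^ 2) / c ^ 2 = 1 / (c ^ 2 + z ^ 2) := by field_simp
  simp only [smul_eq_mul]
  rw [hx, hs, he, hf', abs_of_pos (by positivity)]
  have : 0 < Real.sqrt (2 * Real.pi) := by positivity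
  field_simp

/-- The substitution `y = 1 / z²`, expressing that Lévy(1) is the law of `Z⁻²` with `Z`
standard Gaussian. -/
lemma integral_levy_eq (f : ℝ → ℝ) :
    (∫ y in Set.Ioi (0 : ℝ),
        f y / Real.sqrt (2 * Real.pi * y ^ 3) * Real.exp (-1 / (2 * y)))
      = ∫ z in Set.Ioi (0 : ℝ),
          f (1 / z ^ 2) * (2 / Real.sqrt (2 * Real.pi) * Real.exp (-z ^ 2 / 2)) := by
  have himg : (fun z : ℝ => 1 / z ^ 2) '' Set.Ioi 0 = Set.Ioi (0 : ℝ) := by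
    ext y
    constructor
    · rintro ⟨z, hz, rfl⟩
      have hz : 0 < z := hz
      exact Set.mem_Ioi.2 (by positivity)
    · intro hy
      have hy : 0 < y := hy
      refine ⟨Real.sqrt (1 / y), Set.mem_Ioi.2 (by positivity), ?_⟩
      simp only
      rw [Real.sq_sqrt (by positivity), one_div_one_div]
  have hinj : Set.InjOn (fun z : ℝ => 1 / z ^ 2) (Set.Ioi 0) := by
    intro a ha b hb h
    have ha : 0 < a := ha
    have hb : 0 < b := hb
    simp only [one_div, inv_inj] at h
    exact (pow_left_inj₀ ha.le hb.le two_ne_zero).1 h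
  have hder : ∀ z ∈ Set.Ioi (0 : ℝ), HasDerivWithinAt (fun z : ℝ => 1 / z ^ 2)
      (-(2 / z ^ 3)) (Set.Ioi 0) z := by
    intro z hz
    have hz : 0 < z := hz
    have h1 : HasDerivAt (fun z : ℝ => z ^ 2) (2 * z) z := by simpa using hasDerivAt_pow 2 z
    have h2 := (hasDerivAt_const z (1 : ℝ)).div h1 (by positivity : z ^ 2 ≠ 0)
    refine (h2.congr_deriv ?_).hasDerivWithinAt
    field_simp
    ring
  conv_lhs => rw [← himg]
  rw [integral_image_eq_integral_abs_deriv_smul measurableSet_Ioi hder hinj]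
  refine setIntegral_congr_fun measurableSet_Ioi fun z hz => ?_
  have hz : 0 < z := hz
  have hs : Real.sqrt (2 * Real.pi * (1 / z ^ 2) ^ 3)
      = Real.sqrt (2 * Real.pi) * (1 / z ^ 3) := by
    rw [← Real.sqrt_sq (by positivity : 0 ≤ 1 / z ^ 3), ← Real.sqrt_mul (by positivity)]
    congr 1
    field_simp
  have he : -1 / (2 * (1 / z ^ 2)) = -z ^ 2 / 2 := by field_simp
  simp only [smul_eq_mul]
  rw [hs, he, abs_neg, abs_of_pos (by positivity)]
  have : 0 < Real.sqrt (2 * Real.pi) := by positivity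
  field_simp

/-- If `D(c)` has density `d_c(x) = c (2π x (1−x)^3)^(−1/2) exp(−c² x/(2(1−x)))` on `(0,1)`,
then `c^(−2) (1 − D(c))` converges in distribution, as `c → 0⁺`, to the Lévy(1) law with
density `y ↦ (2π y³)^(−1/2) e^(−1/(2y))` on `(0,∞)`: for every bounded continuous
`f : ℝ → ℝ`, `∫_0^1 f((1−x)/c²) d_c(x) dx → ∫_0^∞ f(y) (2π y³)^(−1/2) e^(−1/(2y)) dy`. -/
theorem stmt5 (f : ℝ → ℝ) (hf : Continuous f) (hb : ∃ M, ∀ x, |f x| ≤ M) :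
    Tendsto (fun c : ℝ =>
        ∫ x in Set.Ioo (0 : ℝ) 1,
          f ((1 - x) / c ^ 2) * (c / Real.sqrt (2 * Real.pi * x * (1 - x) ^ 3)
            * Real.exp (-(c ^ 2 * x) / (2 * (1 - x)))))
      (nhdsWithin (0 : ℝ) (Set.Ioi 0))
      (nhds (∫ y in Set.Ioi (0 : ℝ),
        f y / Real.sqrt (2 * Real.pi * y ^ 3) * Real.exp (-1 / (2 * y)))) := by
  obtain ⟨M, hM⟩ := hb
  rw [integral_levy_eq]
  refine Tendsto.congr' (f₁ := fun c : ℝ => ∫ z in Set.Ioi (0 : ℝ),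
      f (1 / (c ^ 2 + z ^ 2)) * (2 / Real.sqrt (2 * Real.pi) * Real.exp (-z ^ 2 / 2))) ?_ ?_
  · filter_upwards [self_mem_nhdsWithin] with c hc
    exact (integral_fireproof_eq f hc).symm
  refine tendsto_integral_filter_of_dominated_convergence
    (fun z => M * (2 / Real.sqrt (2 * Real.pi) * Real.exp (-z ^ 2 / 2))) ?_ ?_ ?_ ?_
  · refine Eventually.of_forall fun c => Measurable.aestronglyMeasurable ?_
    have := hf.measurable
    fun_prop
  · refine Eventually.of_forall fun c => Eventually.of_forall fun z => ?_
    have hg : 0 ≤ 2 / Real.sqrt (2 * Real.pi) * Real.exp (-z ^ 2 / 2) := by positivity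
    rw [Real.norm_eq_abs, abs_mul, abs_of_nonneg hg]
    exact mul_le_mul_of_nonneg_right (hM _) hg
  · have h := (integrable_exp_neg_mul_sq (b := 1 / 2) (by norm_num)).integrableOn
      (s := Set.Ioi (0 : ℝ))
    refine ((h.const_mul (2 / Real.sqrt (2 * Real.pi))).const_mul M).congr
      (Eventually.of_forall fun z => ?_)
    simp only
    congr 3
    ring
  · filter_upwards [ae_restrict_mem measurableSet_Ioi] with z hz
    have hz : 0 < z := hz
    refine Tendsto.mul_const _ ((hf.tendsto _).comp ?_)
    have h : ContinuousAt (fun c : ℝ => 1 / (c ^ 2 + z ^ 2)) 0 :=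
      ContinuousAt.div (by fun_prop) (by fun_prop) (by positivity)
    simpa [ContinuousAt] using h.tendsto.mono_left (nhdsWithin_le_nhds (s := Set.Ioi 0))
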